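/- With piecewise constant averaging (coarse-grained variable defined by the normalized constant vector $Q_1$ on each block of $M$ atoms), the diagonal entry of the memory kernel at time zero satisfies $0 \leq \Theta_{0,0}(0) \leq \frac{2\kappa_1 + 4\kappa_2}{M}$, where $\Theta_{0,0}(0) = \frac{1}{2\pi}\int_0^{2\pi} Q_1^{\intercal}\widehat{\mathcal{A}}Q_2(Q_2^{\intercal}\widehat{\mathcal{A}}Q_2)^{-1}Q_2^{\intercal}\widehat{\mathcal{A}}Q_1 \, d\xi$. -/

import Mathlib

open Matrix Complex Real

noncomputable def A0 (M : ℕ) (κ1 κ2 : ℝ) : Matrix (Fin M) (Fin M) ℂ := fun i j =>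
  if (i : ℤ) = (j : ℤ) then 2 * ((κ1 : ℂ) + κ2)
  else if |(i : ℤ) - (j : ℤ)| = 1 then -(κ1 : ℂ)
  else if |(i : ℤ) - (j : ℤ)| = 2 then -(κ2 : ℂ) else 0

noncomputable def A1 (M : ℕ) (κ1 κ2 : ℝ) : Matrix (Fin M) (Fin M) ℂ := fun i j =>
  if (i : ℕ) = 0 ∧ (j : ℕ) = M - 1 then -(κ1 : ℂ)
  else if ((i : ℕ) = 0 ∧ (j : ℕ) = M - 2) ∨ ((i : ℕ) = 1 ∧ (j : ℕ) = M - 1) then -(κ2 : ℂ)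
  else 0

noncomputable def Ahat (M : ℕ) (κ1 κ2 ξ : ℝ) : Matrix (Fin M) (Fin M) ℂ :=
  A0 M κ1 κ2 + Complex.exp (-(ξ : ℂ) * Complex.I) • A1 M κ1 κ2
    + Complex.exp ((ξ : ℂ) * Complex.I) • (A1 M κ1 κ2)ᵀ

noncomputable def q1 (M : ℕ) : Fin M → ℂ := fun _ => (1 / Real.sqrt M : ℝ)

noncomputable def q1r (M : ℕ) : Fin M → ℝ := fun _ => 1 / Real.sqrt M

noncomputable def q1col (M : ℕ) : Matrix (Fin M) (Fin 1) ℂ := fun _ _ => (1 / Real.sqrt M : ℝ)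

open scoped ComplexOrder

noncomputable def sg (M : ℕ) (i : Fin M) : Fin M :=
  ⟨if (i : ℕ) + 1 < M then (i : ℕ) + 1 else 0, by have := i.2; split_ifs <;> omega⟩

noncomputable def ww (M : ℕ) (e : ℂ) (i : Fin M) : ℂ := if (i : ℕ) + 1 < M then 1 else e

noncomputable def SS (M : ℕ) (e : ℂ) : Matrix (Fin M) (Fin M) ℂ := fun i j =>
  if j = sg M i then ww M e i else 0

lemma sg_inj (M : ℕ) (i j : Fin M) (h : sg M i = sg M j) : i = j := by
  have := i.2
  have := j.2
  simp only [sg, Fin.mk.injEq] at h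
  ext
  split_ifs at h <;> omega

lemma SS_mul (M : ℕ) (e : ℂ) (i j : Fin M) :
    (SS M e * SS M e) i j = if j = sg M (sg M i) then ww M e i * ww M e (sg M i) else 0 := by
  rw [Matrix.mul_apply, Finset.sum_eq_single (sg M i)]
  · simp [SS]
  · intro b _ hb
    simp [SS, hb]
  · simp

lemma SS_unit (M : ℕ) (e : ℂ) (he : e * star e = 1) : SS M e * (SS M e)ᴴ = 1 := by
  ext i j
  simp only [Matrix.mul_apply, SS, Matrix.conjTranspose_apply, Matrix.one_apply]
  simp only [ite_mul, zero_mul, Finset.sum_ite_eq', Finset.sum_ite_eq, Finset.mem_univ, if_true]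
  by_cases h : i = j
  · subst h
    simp only [if_true, ww]
    split_ifs
    · simp
    · exact he
  · have : sg M i ≠ sg M j := fun h' => h (sg_inj M i j h')
    simp [h, this]

lemma Ahat_eq (M : ℕ) (hM : 5 ≤ M) (κ1 κ2 ξ : ℝ) (e : ℂ) (he : e = Complex.exp ((ξ : ℂ) * Complex.I)) :
    Ahat M κ1 κ2 ξ = (2 * ((κ1 : ℂ) + κ2)) • (1 : Matrix (Fin M) (Fin M) ℂ)
      - (κ1 : ℂ) • (SS M e + (SS M e)ᴴ) - (κ2 : ℂ) • (SS M e * SS M e + (SS M e * SS M e)ᴴ) := by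
  have hc : Complex.exp (-(ξ : ℂ) * Complex.I) = star e := by
    rw [he, Complex.star_def, ← Complex.exp_conj]; simp
  ext i j
  simp only [Ahat, Matrix.add_apply, Matrix.sub_apply, Matrix.smul_apply, Matrix.conjTranspose_apply,
    SS_mul, Matrix.transpose_apply, smul_eq_mul, hc, ← he, Matrix.one_apply]
  obtain ⟨i, hi⟩ := i
  obtain ⟨j, hj⟩ := j
  have a1 : |(i : ℤ) - (j : ℤ)| = 1 ↔ (i = j + 1 ∨ j = i + 1) := by
    rw [abs_eq (by norm_num)]; omega
  have a2 : |(i : ℤ) - (j : ℤ)| = 2 ↔ (i = j + 2 ∨ j = i + 2) := by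
    rw [abs_eq (by norm_num)]; omega
  simp only [A0, A1, SS, sg, ww, Fin.mk.injEq, a1, a2, Nat.cast_inj]
  clear a1 a2 he hc
  rcases (by omega : j = i ∨ j = i + 1 ∨ j = i + 2 ∨ i = j + 1 ∨ i = j + 2 ∨ (i + 2 < j ∧ ¬ (i = 0 ∧ j = M - 1) ∧ ¬ (i = 0 ∧ j = M - 2) ∧ ¬ (i = 1 ∧ j = M - 1)) ∨ (j + 2 < i ∧ ¬ (j = 0 ∧ i = M - 1) ∧ ¬ (j = 0 ∧ i = M - 2) ∧ ¬ (j = 1 ∧ i = M - 1))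
    ∨ (i = 0 ∧ j = M - 1) ∨ (i = 0 ∧ j = M - 2) ∨ (i = 1 ∧ j = M - 1)
    ∨ (j = 0 ∧ i = M - 1) ∨ (j = 0 ∧ i = M - 2) ∨ (j = 1 ∧ i = M - 1)) with
    h | h | h | h | h | h | h | h | h | h | h | h | h <;>
  by_cases p1 : i + 1 < M <;> by_cases p2 : j + 1 < M <;>
  by_cases p3 : i + 2 < M <;> by_cases p4 : j + 2 < M <;>
  first
  | (exfalso; omega)
  | (simp (disch := omega) only [if_pos, if_neg, p1, p2, if_true, if_false, star_one, star_zero, star_mul', star_neg]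
     try ring)

lemma Ahat_psd (M : ℕ) (hM : 5 ≤ M) (κ1 κ2 ξ : ℝ) (h1 : 0 < κ1) (h2 : 0 < κ1 + 4 * κ2) :
    (Ahat M κ1 κ2 ξ).PosSemidef := by
  set e := Complex.exp ((ξ : ℂ) * Complex.I) with he
  have hu : e * star e = 1 := by
    rw [he, Complex.star_def, ← Complex.exp_conj, ← Complex.exp_add]; simp
  have hS := SS_unit M e hu
  have hS' : (SS M e)ᴴ * SS M e = 1 := mul_eq_one_comm.mp hS
  rw [Ahat_eq M hM κ1 κ2 ξ e he]
  set S := SS M e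
  set T := Sᴴ with hT
  have hTT : Tᴴ = S := by simp [hT]
  have hL : ((1 - S)ᴴ * (1 - S)) = 2 - (S + T) := by
    rw [conjTranspose_sub, conjTranspose_one, ← hT, sub_mul, mul_sub, mul_sub, hS']
    simp only [one_mul, mul_one]
    rw [← one_add_one_eq_two]; abel
  have hN : ((1 - S * S)ᴴ * (1 - S * S)) = 2 - (S * S + T * T) := by
    have : T * T * (S * S) = 1 := by
      rw [mul_assoc, ← mul_assoc T S S, hS', one_mul, hS']
    rw [conjTranspose_sub, conjTranspose_one, conjTranspose_mul, ← hT, sub_mul, mul_sub, mul_sub, this]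
    simp only [one_mul, mul_one]
    rw [← one_add_one_eq_two]; abel
  have p1 := posSemidef_conjTranspose_mul_self (1 - S)
  have p2 := posSemidef_conjTranspose_mul_self (1 - S * S)
  have p3 := posSemidef_conjTranspose_mul_self ((1 - S)ᴴ * (1 - S))
  have hLL : ((1 - S)ᴴ * (1 - S))ᴴ * ((1 - S)ᴴ * (1 - S)) = 6 - 4 * (S + T) + (S * S + T * T) := by
    rw [p1.1, hL]
    have : (S + T) * (S + T) = 2 + (S * S + T * T) := by
      rw [add_mul, mul_add, mul_add, hS, hS', ← one_add_one_eq_two]; abel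
    calc (2 - (S + T)) * (2 - (S + T)) = 4 - 4 * (S + T) + (S + T) * (S + T) := by
          rw [sub_mul, mul_sub, mul_sub, mul_two, two_mul, mul_two]
          rw [show (4 : Matrix (Fin M) (Fin M) ℂ) = 2 + 2 by norm_num, add_mul 2 2, two_mul]
          abel
      _ = _ := by
          rw [this, show (6 : Matrix (Fin M) (Fin M) ℂ) = 4 + 2 by norm_num]
          abel
  rw [hLL] at p3
  rw [hL] at p1
  rw [hN] at p2
  rw [conjTranspose_mul, ← hT]
  have two : (2 : Matrix (Fin M) (Fin M) ℂ) = (2 : ℂ) • 1 := by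
    ext i j; simp [Matrix.one_apply, Matrix.ofNat_apply]
  have four : (4 : Matrix (Fin M) (Fin M) ℂ) = (4 : ℂ) • 1 := by
    ext i j; simp [Matrix.one_apply, Matrix.ofNat_apply]
  have six : (6 : Matrix (Fin M) (Fin M) ℂ) = (6 : ℂ) • 1 := by
    ext i j; simp [Matrix.one_apply, Matrix.ofNat_apply]
  rcases le_total 0 κ2 with hk | hk
  · have r := (p1.smul (a := (κ1 : ℂ)) (by exact_mod_cast h1.le)).add
      (p2.smul (a := (κ2 : ℂ)) (by exact_mod_cast hk))
    convert r using 1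
    rw [two]; module
  · have r := (p1.smul (a := ((κ1 + 4 * κ2 : ℝ) : ℂ)) (by exact_mod_cast h2.le)).add
      (p3.smul (a := ((-κ2 : ℝ) : ℂ)) (by exact_mod_cast (by linarith)))
    convert r using 1
    rw [two, four, six, smul_mul_assoc, one_mul]; push_cast; module

lemma sum_ww (M : ℕ) (hM : 5 ≤ M) (e : ℂ) : ∑ i, ww M e i = M - 1 + e := by
  obtain ⟨n, rfl⟩ : ∃ n, M = n + 1 := ⟨M - 1, by omega⟩
  rw [Fin.sum_univ_castSucc]
  simp [ww]

lemma sum_www (M : ℕ) (hM : 5 ≤ M) (e : ℂ) : ∑ i, ww M e i * ww M e (sg M i) = M - 2 + 2 * e := by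
  obtain ⟨n, rfl⟩ : ∃ n, M = n + 2 := ⟨M - 2, by omega⟩
  rw [Fin.sum_univ_castSucc, Fin.sum_univ_castSucc]
  simp [ww, sg]
  ring

lemma qAq (M : ℕ) (hM : 5 ≤ M) (κ1 κ2 ξ : ℝ) :
    ((q1col M)ᵀ * Ahat M κ1 κ2 ξ * q1col M) 0 0
      = (((2 * κ1 + 4 * κ2) / M * (1 - Real.cos ξ) : ℝ) : ℂ) := by
  set e := Complex.exp ((ξ : ℂ) * Complex.I) with he
  have hs : ((q1col M)ᵀ * Ahat M κ1 κ2 ξ * q1col M) 0 0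
      = (1 / M : ℂ) * ∑ i, ∑ j, Ahat M κ1 κ2 ξ i j := by
    have hq : ((1 / Real.sqrt M : ℝ) : ℂ) * ((1 / Real.sqrt M : ℝ) : ℂ) = 1 / M := by
      rw [← Complex.ofReal_mul, div_mul_div_comm, Real.mul_self_sqrt (by positivity)]; simp
    simp only [Matrix.mul_apply, q1col, Matrix.transpose_apply, ← Finset.mul_sum, ← Finset.sum_mul]
    rw [mul_right_comm, hq, Finset.sum_comm]
  have s1 : ∑ i, ∑ j, SS M e i j = M - 1 + e := by
    simp [SS, sum_ww M hM]
  have s2 : ∑ i, ∑ j, (SS M e * SS M e) i j = M - 2 + 2 * e := by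
    simp [SS_mul, sum_www M hM]
  have s1' : ∑ i, ∑ j, star (SS M e j i) = M - 1 + star e := by
    rw [Finset.sum_comm]; simp only [← star_sum, s1]; simp
  have s2' : ∑ i, ∑ j, star ((SS M e * SS M e) j i) = M - 2 + 2 * star e := by
    rw [Finset.sum_comm]; simp only [← star_sum, s2]; simp
  have hcos : e + star e = 2 * Complex.cos ξ := by
    rw [Complex.two_cos, he, Complex.star_def, ← Complex.exp_conj]; simp
  rw [hs, Ahat_eq M hM κ1 κ2 ξ e he]
  simp only [Matrix.add_apply, Matrix.sub_apply, Matrix.smul_apply, Matrix.conjTranspose_apply, smul_eq_mul,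
    Finset.sum_sub_distrib, Finset.sum_add_distrib, ← Finset.mul_sum, s1, s2, s1', s2']
  have s0 : ∑ i : Fin M, ∑ j : Fin M, (1 : Matrix (Fin M) (Fin M) ℂ) i j = M := by
    simp [Matrix.one_apply]
  rw [s0]
  push_cast
  rw [show (1 - Complex.cos ξ : ℂ) = (2 - (e + star e)) / 2 by rw [hcos]; ring]
  ring

lemma schur {m n : Type*} [Fintype m] [Fintype n] [DecidableEq n]
    (A : Matrix m m ℂ) (hA : A.PosSemidef) (q : Matrix m (Fin 1) ℂ) (Q : Matrix m n ℂ) :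
    0 ≤ (qᴴ * A * Q * (Qᴴ * A * Q)⁻¹ * (Qᴴ * A * q)) 0 0 ∧
    (qᴴ * A * Q * (Qᴴ * A * Q)⁻¹ * (Qᴴ * A * q)) 0 0 ≤ (qᴴ * A * q) 0 0 := by
  have hD : (Qᴴ * A * Q).PosSemidef := hA.conjTranspose_mul_mul_same Q
  have hDi := hD.inv
  set D := Qᴴ * A * Q with hDdef
  set B := Qᴴ * A * q with hB
  have hBH : qᴴ * A * Q = Bᴴ := by
    rw [hB, conjTranspose_mul, conjTranspose_mul, conjTranspose_conjTranspose, hA.1, Matrix.mul_assoc]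
  rw [hBH]
  have hz := (hDi.conjTranspose_mul_mul_same B)
  refine ⟨hz.diag_nonneg, ?_⟩
  by_cases hu : IsUnit D.det
  · have hv := (hA.conjTranspose_mul_mul_same (q - Q * (D⁻¹ * B))).diag_nonneg (i := 0)
    have : (q - Q * (D⁻¹ * B))ᴴ * A * (q - Q * (D⁻¹ * B)) = qᴴ * A * q - Bᴴ * D⁻¹ * B := by
      have e1 : qᴴ * A * (Q * (D⁻¹ * B)) = Bᴴ * D⁻¹ * B := by
        rw [← Matrix.mul_assoc, hBH, Matrix.mul_assoc]
      have e2 : (Q * (D⁻¹ * B))ᴴ * A * q = Bᴴ * D⁻¹ * B := by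
        rw [conjTranspose_mul, conjTranspose_mul, hDi.1, Matrix.mul_assoc, Matrix.mul_assoc, ← Matrix.mul_assoc Qᴴ, ← hB]
      have e3 : (Q * (D⁻¹ * B))ᴴ * A * (Q * (D⁻¹ * B)) = Bᴴ * D⁻¹ * B := by
        rw [conjTranspose_mul, conjTranspose_mul, hDi.1]
        calc Bᴴ * D⁻¹ * Qᴴ * A * (Q * (D⁻¹ * B)) = Bᴴ * D⁻¹ * ((Qᴴ * A * Q) * D⁻¹ * B) := by
              simp only [Matrix.mul_assoc]
          _ = _ := by rw [← hDdef, Matrix.mul_nonsing_inv _ hu, Matrix.one_mul]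
      rw [conjTranspose_sub, Matrix.sub_mul, Matrix.sub_mul, Matrix.mul_sub, Matrix.mul_sub, e1, e2, e3]
      abel
    rw [this, Matrix.sub_apply] at hv
    exact sub_nonneg.mp hv
  · rw [Matrix.nonsing_inv_apply_not_isUnit _ hu]
    simpa using (hA.conjTranspose_mul_mul_same q).diag_nonneg (i := 0)

theorem kernel_diagonal_bound_piecewise_constant (M : ℕ) (hM : 5 ≤ M) (κ1 κ2 : ℝ)
    (h1 : 0 < κ1) (h2 : 0 < κ1 + 4 * κ2)
    (Q2 : Matrix (Fin M) (Fin (M - 1)) ℝ)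
    (horth : Q2ᵀ * Q2 = 1) (hcompl : Q2 * Q2ᵀ = 1 - Matrix.vecMulVec (q1r M) (q1r M))
    (Θ00 : ℂ)
    (hΘ : Θ00 = (1 / (2 * Real.pi) : ℂ) * ∫ ξ in (0 : ℝ)..(2 * Real.pi),
        ((q1col M)ᵀ * Ahat M κ1 κ2 ξ * Q2.map Complex.ofReal *
            ((Q2.map Complex.ofReal)ᵀ * Ahat M κ1 κ2 ξ * Q2.map Complex.ofReal)⁻¹ *
              ((Q2.map Complex.ofReal)ᵀ * Ahat M κ1 κ2 ξ * q1col M)) 0 0) :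
    Θ00.im = 0 ∧ 0 ≤ Θ00.re ∧ Θ00.re ≤ (2 * κ1 + 4 * κ2) / M := by
  have key : ∀ ξ : ℝ, ∃ r : ℝ, 0 ≤ r ∧ r ≤ (2 * κ1 + 4 * κ2) / M * (1 - Real.cos ξ) ∧
      ((q1col M)ᵀ * Ahat M κ1 κ2 ξ * Q2.map Complex.ofReal *
            ((Q2.map Complex.ofReal)ᵀ * Ahat M κ1 κ2 ξ * Q2.map Complex.ofReal)⁻¹ *
              ((Q2.map Complex.ofReal)ᵀ * Ahat M κ1 κ2 ξ * q1col M)) 0 0 = (r : ℂ) := by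
    intro ξ
    have hq : (q1col M)ᴴ = (q1col M)ᵀ := by
      ext i j; simp [q1col]
    have hQ : (Q2.map Complex.ofReal)ᴴ = (Q2.map Complex.ofReal)ᵀ := by
      ext i j; simp
    have := schur _ (Ahat_psd M hM κ1 κ2 ξ h1 h2) (q1col M) (Q2.map Complex.ofReal)
    rw [hq, hQ, qAq M hM] at this
    obtain ⟨ha, hb⟩ := this
    rw [Complex.le_def] at ha hb
    refine ⟨_, ha.1, ?_, Complex.ext rfl ha.2.symm⟩
    simpa only [Complex.ofReal_re] using hb.1
  choose r hr0 hr1 hr using key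
  simp only [hr] at hΘ
  rw [intervalIntegral.integral_ofReal] at hΘ
  have hpi := Real.pi_pos
  have hΘ' : Θ00 = ((1 / (2 * Real.pi) * ∫ ξ in (0 : ℝ)..(2 * Real.pi), r ξ : ℝ) : ℂ) := by
    rw [hΘ]; push_cast; rfl
  have hc : 0 ≤ (2 * κ1 + 4 * κ2) / (M : ℝ) := div_nonneg (by linarith) (by positivity)
  rw [hΘ', Complex.ofReal_im, Complex.ofReal_re]
  refine ⟨rfl, mul_nonneg (by positivity)
    (intervalIntegral.integral_nonneg (by positivity) fun x _ => hr0 x), ?_⟩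
  by_cases hi : IntervalIntegrable r MeasureTheory.volume 0 (2 * Real.pi)
  · have hm : (∫ ξ in (0 : ℝ)..(2 * Real.pi), r ξ) ≤
        ∫ ξ in (0 : ℝ)..(2 * Real.pi), (2 * κ1 + 4 * κ2) / M * (1 - Real.cos ξ) :=
      intervalIntegral.integral_mono_on (by positivity) hi
        (Continuous.intervalIntegrable (by fun_prop) _ _) fun x _ => hr1 x
    have hv : (∫ ξ in (0 : ℝ)..(2 * Real.pi), (2 * κ1 + 4 * κ2) / M * (1 - Real.cos ξ))
        = (2 * κ1 + 4 * κ2) / M * (2 * Real.pi) := by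
      rw [intervalIntegral.integral_const_mul, intervalIntegral.integral_sub
        (by simp) (Continuous.intervalIntegrable (by fun_prop) _ _)]
      simp
    rw [hv] at hm
    rw [one_div, inv_mul_le_iff₀ (by positivity)]
    linarith
  · rw [intervalIntegral.integral_undef hi, mul_zero]
    exact hc
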